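/- arXiv:0905.2040 — 2 statements merged into one kernel-verified Lean document; each statement's English description precedes it below -/
import Mathlib

section
/- In every universal Osborn loop Q the identity v^λ · (y · (v^λ\v)) = ((v^λ·y)/v^λ) · v holds for all y,v ∈ Q, where v^λ is the left inverse of v. -/
/-- A loop: a set with multiplication, left division `ld`, right division `rd`
and a two-sided identity `e`. -/
structure LoopStr (Q : Type*) where
  mul : Q → Q → Q
  ld : Q → Q → Q
  rd : Q → Q → Q
  e : Q
  mul_ld : ∀ x y, mul x (ld x y) = y
  rd_mul : ∀ x y, mul (rd y x) x = y
  ld_mul : ∀ x y, ld x (mul x y) = y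
  mul_rd : ∀ x y, rd (mul y x) x = y
  one_mul : ∀ x, mul e x = x
  mul_one : ∀ x, mul x e = x

namespace LoopStr

variable {Q : Type*} (L : LoopStr Q)

/-- The left inverse `x^λ` of `x`, i.e. the unique element with `x^λ · x = e`. -/
def lam (x : Q) : Q := L.rd L.e x

/-- The right inverse `x^ρ` of `x`, i.e. the unique element with `x · x^ρ = e`. -/
def rho (x : Q) : Q := L.ld x L.e

/-- A binary operation `op` with identity `e'` is Osborn if, whenever `xl` is a
left inverse of `x` w.r.t. `op`, the Osborn identity
`x(yz·x) = (x(y·x^λ·x))·(zx)` holds. -/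
def IsOsbornOp (op : Q → Q → Q) (e' : Q) : Prop :=
  ∀ x y z xl, op xl x = e' →
    op x (op (op y z) x) = op (op x (op (op y xl) x)) (op z x)

/-- The `u,v`-principal isotope: `x ∗ y = (x/v)·(u\y)`; its identity is `u·v`. -/
def isotope (u v : Q) : Q → Q → Q := fun x y => L.mul (L.rd x v) (L.ld u y)

/-- `Q` is a universal Osborn loop: every `u,v`-principal isotope is Osborn. -/
def Universal : Prop := ∀ u v, IsOsbornOp (L.isotope u v) (L.mul u v)

/-- `Q` is a left universal Osborn loop: every left principal isotope
`x ∗ y = (x/v)·y` (identity `v`) is Osborn. -/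
def LeftUniversal : Prop := ∀ v, IsOsbornOp (fun x y => L.mul (L.rd x v) y) v

/-- `Q` is a right universal Osborn loop: every right principal isotope
`x ∗ y = x·(u\y)` (identity `u`) is Osborn. -/
def RightUniversal : Prop := ∀ u, IsOsbornOp (fun x y => L.mul x (L.ld u y)) u

end LoopStr

open LoopStr

/-- In an Osborn operation with identity `e'` and both cancellation laws, `v · r = e'` implies
`(v · (c · r)) · v = v · c`. -/
theorem LoopStr.IsOsbornOp.mul_mul_inv_mul {Q : Type*} {op : Q → Q → Q} {e' : Q}
    (h : IsOsbornOp op e') (one_op : ∀ x, op e' x = x) (op_one : ∀ x, op x e' = x)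
    (left_cancel : ∀ x y z, op x y = op x z → y = z)
    (right_cancel : ∀ x y z, op y x = op z x → y = z)
    {v r : Q} (hvr : op v r = e') (c : Q) :
    op (op v (op c r)) v = op v c := by
  have osborn : ∀ y z, op r (op (op y z) r) = op (op r (op (op y v) r)) (op z r) :=
    fun y z => h r y z v hvr
  have conj_left_inv : op r (op (op v v) r) = e' := by
    apply right_cancel (op r r)
    rw [← osborn, hvr, one_op, one_op]
  have conj_mul : ∀ z, op r (op (op v z) r) = op z r := fun z => by
    rw [osborn, conj_left_inv, one_op]
  have conj_left_inv_mul : ∀ a, op r (op (op (op v a) v) r) = a := fun a => by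
    apply right_cancel r
    have hone := osborn (op v a) e'
    rw [op_one, one_op] at hone
    rw [← hone, conj_mul]
  apply right_cancel r
  apply left_cancel r
  rw [conj_left_inv_mul, conj_mul]

namespace LoopStr

variable {Q : Type*} (L : LoopStr Q)

theorem mul_left_cancel {x y z : Q} (hyz : L.mul x y = L.mul x z) : y = z := by
  rw [← L.ld_mul x y, hyz, L.ld_mul]

theorem mul_right_cancel {x y z : Q} (hyz : L.mul y x = L.mul z x) : y = z := by
  rw [← L.mul_rd x y, hyz, L.mul_rd]

theorem e_ld (x : Q) : L.ld L.e x = x := by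
  rw [← L.one_mul (L.ld L.e x), L.mul_ld]

theorem rd_e (x : Q) : L.rd x L.e = x := by
  rw [← L.mul_one (L.rd x L.e), L.rd_mul]

theorem rd_self (x : Q) : L.rd x x = L.e := by
  simpa only [L.one_mul] using L.mul_rd x L.e

/-- Every left principal isotope of a universal Osborn loop is Osborn. -/
theorem Universal.leftUniversal {L : LoopStr Q} (h : L.Universal) : L.LeftUniversal := by
  intro v
  have hv := h L.e v
  unfold isotope at hv
  simpa only [L.e_ld, L.one_mul] using hv

/-- In a left universal Osborn loop, `a · r = v` implies
`((a · ((c / v) · r)) / v) · (a · v) = a · c`. -/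
theorem LeftUniversal.mul_rd_mul {L : LoopStr Q} (h : L.LeftUniversal) {a r v : Q}
    (har : L.mul a r = v) (c : Q) :
    L.mul (L.rd (L.mul a (L.mul (L.rd c v) r)) v) (L.mul a v) = L.mul a c := by
  have key := (h v).mul_mul_inv_mul
    (fun x => by rw [L.rd_self, L.one_mul]) (fun x => L.rd_mul v x)
    (fun _ _ _ hyz => L.mul_left_cancel hyz)
    (fun x y z hyz => by
      rw [← L.rd_mul v y, L.mul_right_cancel hyz, L.rd_mul])
    (v := L.mul a v) (r := r) (by rw [L.mul_rd, har]) c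
  simpa only [L.mul_rd] using key

end LoopStr

theorem universal_osborn_lam_identity {Q : Type*} (L : LoopStr Q)
    (h : L.Universal) (y v : Q) :
    L.mul (L.lam v) (L.mul y (L.ld (L.lam v) v)) =
      L.mul (L.rd (L.mul (L.lam v) y) (L.lam v)) v := by
  have hleft := h.leftUniversal
  have lam_mul : L.mul (L.lam v) v = L.e := L.rd_mul v L.e
  have hv := hleft.mul_rd_mul (L.mul_ld (L.lam v) v) (L.mul y v)
  rw [lam_mul, L.mul_rd, L.mul_one] at hv
  have he := hleft.mul_rd_mul lam_mul y
  rw [L.rd_e, L.rd_e, L.mul_one] at he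
  rw [← he, L.mul_rd, ← hv, L.rd_mul]
end

section
/- In every right universal Osborn loop Q, the identity ((uz)·(u\((yz)·((uz)\u))))·z = (uz)·(u\(yz)) holds for all y,z,u ∈ Q. -/
open LoopStr

namespace LoopStr

variable {Q : Type*} {L : LoopStr Q}

theorem ld_self (x : Q) : L.ld x x = L.e := by
  simpa only [L.mul_one] using L.ld_mul x L.e

/-- The Osborn identity of the isotope `x·(u\y)`, with all divisions by `u` of variables removed
and the left-inverse factor eliminated by specialising the third variable to the identity. -/
theorem RightUniversal.isotope_identity (h : L.RightUniversal) (u a y z : Q) :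
    L.mul (L.mul u a) (L.ld u (L.mul (L.mul y z) a)) =
      L.mul (L.rd (L.mul (L.mul u a) (L.ld u (L.mul y a))) a)
        (L.ld u (L.mul (L.mul u z) a)) := by
  have hz := fun w => h u (L.mul u a) y (L.mul u w) (L.rd u a) (by simp only [L.ld_mul, L.rd_mul])
  simp only [L.ld_mul] at hz
  have he := hz L.e
  simp only [L.mul_one, L.ld_mul] at he
  rw [hz z, he, L.mul_rd]

theorem RightUniversal.mul_ld_mul (h : L.RightUniversal) (u a y : Q) :
    L.mul (L.mul (L.mul u a) a) (L.ld (L.mul u a) (L.mul y a)) =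
      L.mul (L.mul (L.mul u a) (L.ld u y)) a := by
  have hu := h.isotope_identity (L.mul u a) a u (L.ld u y)
  rwa [L.mul_ld, ld_self, L.mul_one, L.mul_rd, L.mul_ld] at hu

/-- The maps `L_{ua} L_u⁻¹`, with `L_x` the left translation by `x`, are first components of autotopisms. -/
theorem RightUniversal.autotopism (h : L.RightUniversal) (u a y z : Q) :
    L.mul (L.mul (L.mul u a) (L.ld u (L.mul y z))) a =
      L.mul (L.mul (L.mul u a) (L.ld u y))
        (L.ld (L.mul u a) (L.mul (L.mul (L.mul u a) z) a)) := by
  rw [← h.mul_ld_mul, h.isotope_identity, h.mul_ld_mul, L.mul_rd]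

end LoopStr

theorem right_universal_osborn_OSI012 {Q : Type*} (L : LoopStr Q)
    (h : L.RightUniversal) (y z u : Q) :
    L.mul
      (L.mul (L.mul u z)
        (L.ld u (L.mul (L.mul y z) (L.ld (L.mul u z) u)))) z =
      L.mul (L.mul u z) (L.ld u (L.mul y z)) := by
  rw [h.autotopism, L.mul_ld, ld_self, L.mul_one]
end
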